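/- arXiv:2503.12713 — 2 statements merged into one kernel-verified Lean document; each statement's English description precedes it below -/
import Mathlib

section
/- Let d be a dendrogram and x, y ∈ d with lh x = lh y = m, and suppose that in Dec^•(d)(ω) one has x(m) < y(m) (where m denotes the parameter set {0,…,m−1}). Let x' be the immediate predecessor of x. Then either (x' ⊸ y and x < y in d), or Dec^•(d)(ω) ⊨ x'(m ∖ {e(x')}) < y(m). -/
/-!
In the parameter sequence of `x(a)` the last parameter has rank `e(x')` among all elements of `a`,
so it depends only on `a` and `x'`. Removing it together with the last point `x` leaves the
sequence of `x'(a \ {v})`, where `v` is the `e(x')`-th element of `a`. Hence the first difference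
between `x(a)` and `y(a)` either survives the truncation, or lies at the last point, so that `x` and
`y` are siblings with `x < y`. It cannot lie at the last parameter, since if both sequences reach
`x'`, they continue with the same parameter `v`.
-/

noncomputable section

/-- A predendrogram: a forest `(C, ⊸)` (presented via the length function `lh` and the
predecessor enumeration `pred`, where `pred x i` is the `i`-th point on the branch below
`x`, of length `i`, and `pred x (lh x) = x`), together with a partial order `<` linear on
roots and on sets of siblings, and a parameter-position function `e` defined on
non-terminal points with `e x ≤ lh x`.  Every point lies below some terminal point. -/
structure Predendro where
  C : Type
  lt : C → C → Prop
  suc : C → C → Prop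
  e : C → ℕ
  lh : C → ℕ
  pred : C → ℕ → C
  pred_self : ∀ x, pred x (lh x) = x
  pred_suc : ∀ x i, i < lh x → suc (pred x i) (pred x (i + 1))
  pred_lh : ∀ x i, i ≤ lh x → lh (pred x i) = i
  pred_pred : ∀ x i j, j ≤ i → i ≤ lh x → pred (pred x i) j = pred x j
  suc_char : ∀ x y, suc x y ↔ lh y = lh x + 1 ∧ pred y (lh x) = x
  lt_irrefl : ∀ x, ¬ lt x x
  lt_trans : ∀ x y z, lt x y → lt y z → lt x z
  lt_linear : ∀ x y, lh x = lh y → (∀ i < lh x, pred x i = pred y i) →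
    x = y ∨ lt x y ∨ lt y x
  e_le : ∀ x, (∃ z, suc x z) → e x ≤ lh x
  term_above : ∀ x, ∃ y, lh x ≤ lh y ∧ pred y (lh x) = x ∧ ∀ z, ¬ suc y z

namespace Predendro

variable (d : Predendro)

/-- `(x, ξ)` is a valid element of `Dec^•(d)(α)`: the parameters `ξ 0, …, ξ (lh x − 1)`
are pairwise distinct and `ξ i` is the `e(pred x i)`-th least element of
`{ξ 0, …, ξ i}` for each `i < lh x`. -/
def Valid {α : Type} [LinearOrder α] (x : d.C) (ξ : ℕ → α) : Prop :=
  (∀ i j, i < j → j < d.lh x → ξ i ≠ ξ j) ∧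
  ∀ i, i < d.lh x →
    ((Finset.range (i + 1)).filter fun j => ξ j < ξ i).card = d.e (d.pred x i)

/-- The Kleene–Brouwer comparison on elements of `Dec^•(d)(α)`:  either the second
sequence is a proper initial segment of the first (longer is smaller), or the first
difference (in the interleaved sequence `x₀, ξ₀, x₁, ξ₁, …`) is smaller. -/
def KBlt {α : Type} [LinearOrder α] (P Q : d.C × (ℕ → α)) : Prop :=
  (d.lh Q.1 < d.lh P.1 ∧ (∀ j ≤ d.lh Q.1, d.pred P.1 j = d.pred Q.1 j) ∧
    ∀ j < d.lh Q.1, P.2 j = Q.2 j) ∨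
  ∃ i, i ≤ d.lh P.1 ∧ i ≤ d.lh Q.1 ∧
    (∀ j < i, d.pred P.1 j = d.pred Q.1 j) ∧ (∀ j < i, P.2 j = Q.2 j) ∧
    ((d.pred P.1 i ≠ d.pred Q.1 i ∧ d.lt (d.pred P.1 i) (d.pred Q.1 i)) ∨
      (d.pred P.1 i = d.pred Q.1 i ∧ i < d.lh P.1 ∧ i < d.lh Q.1 ∧ P.2 i < Q.2 i))

/-- The elements of `Dec^•(d)(α)`. -/
def DecEl (α : Type) [LinearOrder α] : Type :=
  {P : d.C × (ℕ → α) // d.Valid P.1 P.2}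

/-- `d` is a dendrogram: the decoded predilator `Dec^•(d)` is a dilator, i.e. sends
well-orders to well-orders. -/
def IsDendrogram : Prop :=
  ∀ (α : Type) [LinearOrder α], WellFounded ((· < ·) : α → α → Prop) →
    WellFounded (fun P Q : d.DecEl α => d.KBlt P.1 Q.1)

end Predendro

theorem strictMonoOn_card_filter_lt {α : Type*} [Preorder α] [DecidableLT α] (a : Finset α) :
    StrictMonoOn (fun v => (a.filter (· < v)).card) a := by
  intro v hv w _ hvw
  refine Finset.card_lt_card ((Finset.ssubset_iff_of_subset ?_).2 ⟨v, ?_, ?_⟩)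
  · exact Finset.monotone_filter_right a fun _ _ hu => hu.trans hvw
  · exact Finset.mem_filter.2 ⟨hv, hvw⟩
  · exact fun hmem => lt_irrefl v (Finset.mem_filter.1 hmem).2

theorem card_filter_lt_range {m v : ℕ} (hv : v ≤ m) :
    ((Finset.range m).filter (· < v)).card = v := by
  have hfilter : (Finset.range m).filter (· < v) = Finset.range v := by
    ext i
    simp only [Finset.mem_filter, Finset.mem_range]
    omega
  rw [hfilter, Finset.card_range]

namespace Predendro

variable {d : Predendro} {α : Type} [LinearOrder α] {x x' y : d.C} {a : Finset α} {ξ ζ : ℕ → α}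

theorem lh_of_suc (h : d.suc x' x) : d.lh x = d.lh x' + 1 :=
  ((d.suc_char x' x).1 h).1

theorem pred_lh_of_suc (h : d.suc x' x) : d.pred x (d.lh x') = x' :=
  ((d.suc_char x' x).1 h).2

theorem pred_eq_pred_of_suc (h : d.suc x' x) {j : ℕ} (hj : j ≤ d.lh x') :
    d.pred x' j = d.pred x j := by
  have hle : d.lh x' ≤ d.lh x := by rw [lh_of_suc h]; exact Nat.le_succ _
  calc d.pred x' j = d.pred (d.pred x (d.lh x')) j := by rw [pred_lh_of_suc h]
    _ = d.pred x j := d.pred_pred x (d.lh x') j hj hle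

theorem suc_pred_sub_one (h : 0 < d.lh x) : d.suc (d.pred x (d.lh x - 1)) x := by
  have hsuc := d.pred_suc x (d.lh x - 1) (by omega)
  rwa [Nat.sub_add_cancel h, d.pred_self] at hsuc

theorem Valid.injOn (h : d.Valid x ξ) : Set.InjOn ξ (Finset.range (d.lh x)) := by
  intro i hi j hj hij
  simp only [Finset.coe_range, Set.mem_Iio] at hi hj
  rcases lt_trichotomy i j with hlt | heq | hgt
  · exact absurd hij (h.1 i j hlt hj)
  · exact heq
  · exact absurd hij.symm (h.1 j i hgt hi)

theorem Valid.of_suc (h : d.Valid x ξ) (hx : d.suc x' x) : d.Valid x' ξ := by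
  have hlh := lh_of_suc hx
  refine ⟨fun i j hij hj => h.1 i j hij (by omega), fun i hi => ?_⟩
  rw [pred_eq_pred_of_suc hx hi.le]
  exact h.2 i (by omega)

/-- `ξ` is the parameter sequence of the element `x(a)` of `Dec^•(d)(α)`: the element `(x, ξ)` is
valid and its set of parameters is `a`. The values `ξ i` for `lh x ≤ i` are irrelevant. -/
def IsParamSeq (d : Predendro) (x : d.C) (a : Finset α) (ξ : ℕ → α) : Prop :=
  d.Valid x ξ ∧ (Finset.range (d.lh x)).image ξ = a

theorem Valid.isParamSeq (h : d.Valid x ξ) (hmem : ∀ i < d.lh x, ξ i ∈ a)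
    (hcard : a.card ≤ d.lh x) : d.IsParamSeq x a ξ := by
  refine ⟨h, Finset.eq_of_subset_of_card_le ?_ ?_⟩
  · simpa only [Finset.image_subset_iff, Finset.mem_range] using hmem
  · rwa [Finset.card_image_of_injOn h.injOn, Finset.card_range]

namespace IsParamSeq

theorem card_eq (h : d.IsParamSeq x a ξ) : a.card = d.lh x := by
  rw [← h.2, Finset.card_image_of_injOn h.1.injOn, Finset.card_range]

theorem apply_mem (h : d.IsParamSeq x a ξ) {i : ℕ} (hi : i < d.lh x) : ξ i ∈ a := by
  rw [← h.2]
  exact Finset.mem_image_of_mem ξ (Finset.mem_range.2 hi)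

theorem last_mem (h : d.IsParamSeq x a ξ) (hx : d.suc x' x) : ξ (d.lh x') ∈ a :=
  h.apply_mem (by rw [lh_of_suc hx]; exact Nat.lt_succ_self _)

theorem card_filter_lt_last (h : d.IsParamSeq x a ξ) (hx : d.suc x' x) :
    (a.filter (· < ξ (d.lh x'))).card = d.e x' := by
  have hlh := lh_of_suc hx
  have hinj : Set.InjOn ξ ((Finset.range (d.lh x)).filter (ξ · < ξ (d.lh x'))) :=
    h.1.injOn.mono (Finset.coe_subset.2 (Finset.filter_subset _ _))
  rw [← h.2, Finset.filter_image, Finset.card_image_of_injOn hinj, hlh,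
    h.1.2 (d.lh x') (by omega), pred_lh_of_suc hx]

theorem erase_last (h : d.IsParamSeq x a ξ) (hx : d.suc x' x) :
    d.IsParamSeq x' (a.erase (ξ (d.lh x'))) ξ := by
  have hlh := lh_of_suc hx
  refine (h.1.of_suc hx).isParamSeq (fun i hi => ?_) ?_
  · exact Finset.mem_erase.2
      ⟨h.1.1 i (d.lh x') hi (by omega), h.apply_mem (by omega)⟩
  · rw [Finset.card_erase_of_mem (h.last_mem hx), h.card_eq, hlh, Nat.add_sub_cancel]

end IsParamSeq

theorem IsParamSeq.last_eq_last (hξ : d.IsParamSeq x a ξ) (hζ : d.IsParamSeq y a ζ)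
    (hx : d.suc x' x) (hy : d.suc x' y) : ξ (d.lh x') = ζ (d.lh x') :=
  (strictMonoOn_card_filter_lt a).injOn (hξ.last_mem hx) (hζ.last_mem hy) <|
    (hξ.card_filter_lt_last hx).trans (hζ.card_filter_lt_last hy).symm

theorem KBlt.of_suc_or_siblings (h : d.KBlt (x, ξ) (y, ζ)) (hx : d.suc x' x)
    (hxy : d.lh x = d.lh y) :
    d.KBlt (x', ξ) (y, ζ) ∨ (d.suc x' y ∧ (ξ (d.lh x') < ζ (d.lh x') ∨ d.lt x y)) := by
  have hlh := lh_of_suc hx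
  have suc_of_pred_eq (hpred : d.pred x (d.lh x') = d.pred y (d.lh x')) : d.suc x' y :=
    (d.suc_char x' y).2 ⟨hxy ▸ hlh, hpred ▸ pred_lh_of_suc hx⟩
  rcases h with ⟨hlt, -, -⟩ | ⟨i, hix, hiy, hpred, hparam, hdiff⟩
  · exact absurd hxy hlt.ne'
  dsimp only at hix hiy hpred hparam hdiff
  have kblt_of_diff (hi : i ≤ d.lh x')
      (hdiff' : (d.pred x i ≠ d.pred y i ∧ d.lt (d.pred x i) (d.pred y i)) ∨
        (d.pred x i = d.pred y i ∧ i < d.lh x' ∧ i < d.lh y ∧ ξ i < ζ i)) :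
      d.KBlt (x', ξ) (y, ζ) := by
    refine .inr ⟨i, hi, hiy, fun j hj => ?_, hparam, ?_⟩
    · exact (pred_eq_pred_of_suc hx (hj.le.trans hi)).trans (hpred j hj)
    · rwa [← pred_eq_pred_of_suc hx hi] at hdiff'
  rcases hdiff with ⟨hne, hlt⟩ | ⟨heq, hix', hiy', hlt⟩
  · rcases hix.lt_or_eq with hi | rfl
    · exact .inl (kblt_of_diff (by omega) (.inl ⟨hne, hlt⟩))
    · refine .inr ⟨suc_of_pred_eq (hpred _ (by omega)), .inr ?_⟩
      rwa [d.pred_self, hxy, d.pred_self] at hlt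
  · rcases (Nat.lt_succ_iff.1 (hlh ▸ hix')).lt_or_eq with hi | rfl
    · exact .inl (kblt_of_diff hi.le (.inr ⟨heq, hi, hiy', hlt⟩))
    · exact .inr ⟨suc_of_pred_eq heq, .inl hlt⟩

end Predendro

theorem statement_11_general (d : Predendro) {α : Type} [LinearOrder α] {x x' y : d.C}
    {a : Finset α} {ξ ζ : ℕ → α} (hx' : d.suc x' x) (hξ : d.IsParamSeq x a ξ)
    (hζ : d.IsParamSeq y a ζ) (hlt : d.KBlt (x, ξ) (y, ζ)) :
    (d.suc x' y ∧ d.lt x y) ∨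
    ∃ v ∈ a, (a.filter (· < v)).card = d.e x' ∧
      ∃ ξ' : ℕ → α, d.IsParamSeq x' (a.erase v) ξ' ∧ d.KBlt (x', ξ') (y, ζ) := by
  have hxy : d.lh x = d.lh y := hξ.card_eq.symm.trans hζ.card_eq
  rcases hlt.of_suc_or_siblings hx' hxy with htrunc | ⟨hy, hparam | hsib⟩
  · exact .inr ⟨ξ (d.lh x'), hξ.last_mem hx', hξ.card_filter_lt_last hx', ξ,
      hξ.erase_last hx', htrunc⟩
  · exact absurd (hξ.last_eq_last hζ hx' hy) hparam.ne
  · exact .inl ⟨hy, hsib⟩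

/-!
Statement 11: Let `d` be a dendrogram, `x, y ∈ d` with `lh x = lh y = m > 0`, and suppose
`Dec^•(d)(ω) ⊨ x(m) < y(m)`, where `m` denotes the parameter set `{0, …, m−1}`.  Let
`x'` be the immediate predecessor of `x`.  Then either (`x' ⊸ y` and `x < y` in `d`), or
`Dec^•(d)(ω) ⊨ x'(m ∖ {e(x')}) < y(m)`.
-/

theorem statement_11 (d : Predendro) (hd : d.IsDendrogram)
    (x y : d.C) (m : ℕ) (hm : 0 < m) (hx : d.lh x = m) (hy : d.lh y = m)
    (ξ ζ : ℕ → ℕ) (hvx : d.Valid x ξ) (hvy : d.Valid y ζ)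
    (hξm : ∀ i < m, ξ i < m) (hζm : ∀ i < m, ζ i < m)
    (hlt : d.KBlt (x, ξ) (y, ζ)) :
    (d.suc (d.pred x (m - 1)) y ∧ d.lt x y) ∨
    ∃ ξ' : ℕ → ℕ, d.Valid (d.pred x (m - 1)) ξ' ∧
      (∀ i < m - 1, ξ' i < m ∧ ξ' i ≠ d.e (d.pred x (m - 1))) ∧
      d.KBlt (d.pred x (m - 1), ξ') (y, ζ) := by
  subst hx
  refine (statement_11_general d (Predendro.suc_pred_sub_one hm)
    (hvx.isParamSeq (a := Finset.range (d.lh x)) (by simpa only [Finset.mem_range] using hξm)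
      (Finset.card_range _).le)
    (hvy.isParamSeq (by simpa only [hy, Finset.mem_range] using hζm)
      (by rw [Finset.card_range, hy])) hlt).imp_right ?_
  rintro ⟨v, hvm, hv, ξ', hξ', hlt'⟩
  rw [card_filter_lt_range (Finset.mem_range.1 hvm).le] at hv
  refine ⟨ξ', hξ'.1, fun i hi => ?_, hlt'⟩
  have hmem : ξ' i ∈ (Finset.range (d.lh x)).erase v :=
    hξ'.apply_mem (by rwa [d.pred_lh x _ (Nat.sub_le _ _)])
  rw [Finset.mem_erase, Finset.mem_range, hv] at hmem
  exact hmem.symm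

end
end

section
/- Let κ be a measurable cardinal with a normal measure U on κ, and for n < ω let U^n denote the induced ultrafilter on the set [κ]^n of increasing n-tuples from κ (generated by the sets [Y]^n for Y ∈ U). Let c be a countable well-order and c = ⋃_{n<ω} c_n with each c_n a finite suborder of c. For each n define the ultrafilter U_{c_n} on the set κ^{c_n} of order-embeddings c_n → κ by: X ∈ U_{c_n} iff { p ∘ ε_n : p ∈ X } ∈ U^{|c_n|}, where ε_n : |c_n| → c_n is the unique order isomorphism. Then each U_{c_n} is an ω₁-complete ultrafilter, and for every family of sets X_n ∈ U_{c_n} (n < ω) there exists an order-embedding f : c → κ such that f ↾ c_n ∈ X_n for every n < ω. -/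
/-!
Let `κ^I` carry the filter generated by the cubes `{p | range p ⊆ Y}`, `Y ∈ U`. Restricting
embeddings along `I ↪o J` maps the filter on `κ^J` to a filter finer than the one on `κ^I`, and
each `U_{c_n}` is the filter on `κ^{c_n}`. So the restrictions to all `c_n` of almost every member
of `κ^c` lie in the respective `X_n`, and a suitable `f` exists as soon as the filter on `κ^c` is
proper. It is proper because normality places almost every point of `κ` below almost every other
point, so that every `Y ∈ U` admits an embedding of `c` chosen by recursion.

That the filter on `κ^{c_n}` is an ultrafilter is Rowbottom's theorem: if, for almost every first
entry `a`, almost every tail has the same verdict, the diagonal intersection of the sets witnessing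
this for each `a` yields a cube on which the verdict is constant.
-/

noncomputable section

/-- `U` is an ultrafilter on (the powerset of) `S`. -/
def IsUltra {S : Type*} (U : Set (Set S)) : Prop :=
  (∀ A ∈ U, ∀ B : Set S, A ⊆ B → B ∈ U) ∧ (∀ A ∈ U, ∀ B ∈ U, A ∩ B ∈ U) ∧
    (∅ : Set S) ∉ U ∧ ∀ A : Set S, A ∈ U ∨ Aᶜ ∈ U

/-- `U` is closed under countable intersections (`ω₁`-complete). -/
def CtblComplete {S : Type*} (U : Set (Set S)) : Prop :=
  ∀ f : ℕ → Set S, (∀ i, f i ∈ U) → (⋂ i, f i) ∈ U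

/-- The induced measure `U^n` on the set of increasing `n`-tuples (order embeddings
`Fin n ↪o K`), generated by the cubes `[Y]^n` for `Y ∈ U`. -/
def powMem {K : Type*} [LinearOrder K] (U : Set (Set K)) (n : ℕ)
    (X : Set (Fin n ↪o K)) : Prop :=
  ∃ Y ∈ U, ∀ p : Fin n ↪o K, (∀ i, p i ∈ Y) → p ∈ X

/-- The measure `U_{c}` on the set `κ^{c}` of order embeddings of a finite suborder `c`
into `K`:  `X ∈ U_c` iff `{p ∘ ε : p ∈ X} ∈ U^{|c|}`, where `ε : Fin |c| ≃o c` is the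
unique order isomorphism. -/
def Ucn {C K : Type*} [LinearOrder C] [LinearOrder K] (U : Set (Set K)) (s : Finset C) :
    Set (Set ((↥s : Type _) ↪o K)) :=
  {X | powMem U s.card
    {q | ∃ p ∈ X, q = ((s.orderIsoOfFin rfl).toOrderEmbedding.trans p)}}

open Filter Set

section SetFamilies

variable {S : Type*}

theorem IsUltra.exists_ultrafilter {U : Set (Set S)} (hU : IsUltra U) :
    ∃ l : Ultrafilter S, (l : Filter S).sets = U := by
  obtain ⟨hmono, hinter, hempty, hultra⟩ := hU
  have huniv : univ ∈ U := (hultra univ).elim id fun h => absurd (compl_univ ▸ h) hempty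
  let l : Filter S := ⟨U, huniv, fun hA hAB => hmono _ hA _ hAB, fun hA hB => hinter _ hA _ hB⟩
  have hcompl (A : Set S) : Aᶜ ∉ l ↔ A ∈ l :=
    ⟨(hultra A).resolve_right, fun hA hA' => hempty (inter_compl_self A ▸ hinter _ hA _ hA')⟩
  exact ⟨.ofComplNotMemIff l hcompl, rfl⟩

theorem isUltra_sets {l : Filter S} [NeBot l] (h : ∀ A, A ∈ l ∨ Aᶜ ∈ l) : IsUltra l.sets :=
  ⟨fun _ hA _ hAB => mem_of_superset hA hAB, fun _ hA _ hB => inter_mem hA hB, empty_notMem l, h⟩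

theorem ctblComplete_sets_iff {l : Filter S} : CtblComplete l.sets ↔ CountableInterFilter l := by
  constructor
  · refine fun h => ⟨fun A hA hAl => ?_⟩
    rcases A.eq_empty_or_nonempty with rfl | hne
    · simp
    · obtain ⟨f, rfl⟩ := hA.exists_eq_range hne
      exact sInter_range f ▸ h f (forall_mem_range.1 hAl)
  · exact fun _ f hf => countable_iInter_mem.2 hf

end SetFamilies

section NormalFilters

variable {C K : Type*} [LinearOrder C] [LinearOrder K]

/-- A filter on a linear order is normal if it is closed under diagonal intersections; for a
normal measure this is applied to the filter of measure one sets. -/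
def IsNormalFilter (l : Filter K) : Prop :=
  ∀ f : K → Set K, (∀ a, f a ∈ l) → {b | ∀ a < b, b ∈ f a} ∈ l

theorem IsNormalFilter.eventually_eventually_lt {l : Ultrafilter K}
    (hl : IsNormalFilter (l : Filter K)) (hnp : ∀ a, {a} ∉ l) :
    ∀ᶠ a in (l : Filter K), ∀ᶠ b in (l : Filter K), a < b := by
  by_contra hlt
  have hbounded : ∀ᶠ a in (l : Filter K), ∀ᶠ b in (l : Filter K), b ≤ a := by
    simpa only [← Ultrafilter.eventually_not, not_lt] using hlt
  have hdiag : ∀ᶠ b in (l : Filter K), ∀ a < b, ¬ ∀ᶠ x in (l : Filter K), x ≤ a := by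
    have h (a : K) : {b | (∀ᶠ x in (l : Filter K), x ≤ a) → b ≤ a} ∈ l :=
      eventually_imp_distrib_left.2 id
    filter_upwards [hl _ h] with b hb a hab ha using (hb a hab ha).not_gt hab
  -- Almost every `b` would be the least bound, so the least bound alone has measure one.
  obtain ⟨m, hm, hm_least⟩ := (hbounded.and hdiag).exists
  refine hnp m ?_
  filter_upwards [hm, hbounded] with b hbm hb
  exact hbm.antisymm (not_lt.1 fun hmb => hm_least b hmb hb)

theorem exists_orderEmbedding_of_eventually_lt {l : Filter K} [NeBot l]
    (hlt : ∀ᶠ a in l, ∀ᶠ b in l, a < b) [WellFoundedLT C]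
    (hC : ∀ (c : C) (P : C → K → Prop),
      (∀ d < c, ∀ᶠ x in l, P d x) → ∀ᶠ x in l, ∀ d < c, P d x)
    {Y : Set K} (hY : Y ∈ l) : ∃ f : C ↪o K, ∀ c, f c ∈ Y := by
  let Z : Set K := {a ∈ Y | ∀ᶠ b in l, a < b}
  have hZ : ∀ᶠ z in l, z ∈ Z := inter_mem hY hlt
  have hnext (c : C) (g : ∀ d < c, Z) : ∃ z : Z, ∀ d hd, g d hd < z := by
    have habove : ∀ᶠ x in l, ∀ d < c, ∀ hd : d < c, (g d hd : K) < x :=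
      hC c _ fun d hd => (g d hd).2.2.mono fun _ hx _ => hx
    obtain ⟨z, hz, hgz⟩ := (hZ.and habove).exists
    exact ⟨⟨z, hz⟩, fun d hd => hgz d hd hd⟩
  choose next hnext using hnext
  let f : C → Z := wellFounded_lt.fix next
  have hf : StrictMono f := fun d c hdc => by
    rw [show f c = next c fun d _ => f d from wellFounded_lt.fix_eq next c]
    exact hnext c (fun d _ => f d) d hdc
  exact ⟨(OrderEmbedding.ofStrictMono f hf).trans (OrderEmbedding.subtype _), fun c => (f c).2.1⟩

end NormalFilters

section CubeFilters

variable {I J K : Type*} [LinearOrder I] [LinearOrder J] [LinearOrder K] {l : Filter K}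

/-- The filter on the order embeddings `I ↪o K` generated by the cubes `[Y]^I` for `Y ∈ l`. For
`I = Fin n` and an ultrafilter `l = U` it is the measure `U^n`, and for a finite suborder `I = c`
it is `U_c`; infinite `I` are allowed so that all suborders of one order can be treated at once. -/
def cubeFilter (I : Type*) [LinearOrder I] (l : Filter K) : Filter (I ↪o K) :=
  l.lift' fun Y => {p | ∀ i, p i ∈ Y}

theorem monotone_setOf_forall_mem :
    Monotone fun Y : Set K => {p : I ↪o K | ∀ i, p i ∈ Y} :=
  fun _ _ hYZ _ hp i => hYZ (hp i)

theorem mem_cubeFilter {X : Set (I ↪o K)} :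
    X ∈ cubeFilter I l ↔ ∃ Y ∈ l, ∀ p : I ↪o K, (∀ i, p i ∈ Y) → p ∈ X :=
  mem_lift'_sets monotone_setOf_forall_mem

instance countableInterFilter_cubeFilter [CountableInterFilter l] :
    CountableInterFilter (cubeFilter I l) := by
  refine ctblComplete_sets_iff.1 fun X hX => ?_
  choose Y hY hYX using fun n => mem_cubeFilter.1 (hX n)
  exact mem_cubeFilter.2 ⟨⋂ n, Y n, countable_iInter_mem.2 hY, fun p hp =>
    mem_iInter.2 fun n => hYX n p fun i => mem_iInter.1 (hp i) n⟩

theorem tendsto_trans_cubeFilter (g : I ↪o J) (l : Filter K) :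
    Tendsto (fun p : J ↪o K => g.trans p) (cubeFilter J l) (cubeFilter I l) := by
  intro X hX
  obtain ⟨Y, hY, hYX⟩ := mem_cubeFilter.1 hX
  exact mem_cubeFilter.2 ⟨Y, hY, fun p hp => hYX _ fun i => hp (g i)⟩

theorem map_trans_cubeFilter (e : I ≃o J) (l : Filter K) :
    map (fun p : J ↪o K => e.toOrderEmbedding.trans p) (cubeFilter J l) = cubeFilter I l := by
  refine map_eq_of_inverse (fun p => e.symm.toOrderEmbedding.trans p) ?_
    (tendsto_trans_cubeFilter _ l) (tendsto_trans_cubeFilter _ l)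
  ext p i
  simp

theorem Ucn_sets (l : Filter K) (s : Finset J) : Ucn l.sets s = (cubeFilter s l).sets := by
  ext X
  let e := (s.orderIsoOfFin rfl).toOrderEmbedding
  let pull : (s ↪o K) → (Fin s.card ↪o K) := fun p => e.trans p
  have hpull : Function.Injective pull := fun p q hpq => by
    ext x
    simpa [pull, e] using DFunLike.congr_fun hpq ((s.orderIsoOfFin rfl).symm x)
  have himage : {q | ∃ p ∈ X, q = pull p} = pull '' X := by
    ext q
    simp only [mem_ofPred_eq, mem_image, eq_comm]
  calc X ∈ Ucn l.sets s ↔ pull '' X ∈ cubeFilter (Fin s.card) l := by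
        rw [mem_cubeFilter, ← himage]; rfl
    _ ↔ pull ⁻¹' (pull '' X) ∈ cubeFilter s l := by
        rw [← map_trans_cubeFilter (s.orderIsoOfFin rfl) l]; rfl
    _ ↔ X ∈ cubeFilter s l := by rw [hpull.preimage_image]

theorem neBot_cubeFilter (h : ∀ Y ∈ l, ∃ p : I ↪o K, ∀ i, p i ∈ Y) : NeBot (cubeFilter I l) :=
  (lift'_neBot_iff monotone_setOf_forall_mem).2 h

theorem neBot_cubeFilter_of_finite [Finite I] [NeBot l]
    (hlt : ∀ᶠ a in l, ∀ᶠ b in l, a < b) : NeBot (cubeFilter I l) :=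
  neBot_cubeFilter fun _ => exists_orderEmbedding_of_eventually_lt hlt fun c _ hP =>
    (eventually_all_finite (toFinite (Iio c))).2 hP

theorem neBot_cubeFilter_of_countable [Countable I] [WellFoundedLT I] [NeBot l]
    [CountableInterFilter l] (hlt : ∀ᶠ a in l, ∀ᶠ b in l, a < b) : NeBot (cubeFilter I l) :=
  neBot_cubeFilter fun _ => exists_orderEmbedding_of_eventually_lt hlt fun c _ hP =>
    (eventually_countable_ball (to_countable (Iio c))).2 hP

end CubeFilters

section Rowbottom

variable {I K : Type*} [LinearOrder I] [LinearOrder K] {n : ℕ}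

/-- The section at `a` of a set `X` of increasing tuples: the tails `q` whose extension by the
first entry `a` is in `X`. Tails that `a` does not extend to an increasing tuple are included. -/
def tupleSection (X : Set (Fin (n + 1) ↪o K)) (a : K) : Set (Fin n ↪o K) :=
  {q | ∀ p : Fin (n + 1) ↪o K, p 0 = a → (Fin.succOrderEmb n).trans p = q → p ∈ X}

theorem compl_tupleSection_subset (X : Set (Fin (n + 1) ↪o K)) (a : K) :
    (tupleSection X a)ᶜ ⊆ tupleSection Xᶜ a := by
  intro q hq p hpa hpq
  simp only [tupleSection, mem_compl_iff, mem_ofPred_eq, not_forall] at hq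
  obtain ⟨p', hpa', hpq', hpX'⟩ := hq
  suffices p = p' by rwa [this]
  ext i
  induction i using Fin.cases with
  | zero => exact hpa.trans hpa'.symm
  | succ i => exact DFunLike.congr_fun (hpq.trans hpq'.symm) i

theorem IsNormalFilter.mem_cubeFilter_of_eventually_tupleSection {l : Filter K}
    (hl : IsNormalFilter l) {X : Set (Fin (n + 1) ↪o K)}
    (hX : ∀ᶠ a in l, tupleSection X a ∈ cubeFilter (Fin n) l) :
    X ∈ cubeFilter (Fin (n + 1)) l := by
  have hcube (a : K) : ∃ Y ∈ l, tupleSection X a ∈ cubeFilter (Fin n) l →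
      ∀ q : Fin n ↪o K, (∀ i, q i ∈ Y) → q ∈ tupleSection X a := by
    by_cases ha : tupleSection X a ∈ cubeFilter (Fin n) l
    · obtain ⟨Y, hY, hYX⟩ := mem_cubeFilter.1 ha
      exact ⟨Y, hY, fun _ => hYX⟩
    · exact ⟨univ, univ_mem, fun h => absurd h ha⟩
  choose Y hY hYX using hcube
  refine mem_cubeFilter.2 ⟨_, inter_mem hX (hl Y hY), fun p hp => ?_⟩
  have htail (i : Fin n) : p i.succ ∈ Y (p 0) :=
    (hp i.succ).2 (p 0) (p.lt_iff_lt.2 i.succ_pos)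
  exact hYX (p 0) (hp 0).1 ((Fin.succOrderEmb n).trans p) htail p rfl rfl

theorem IsNormalFilter.mem_or_compl_mem_cubeFilter_fin {l : Ultrafilter K}
    (hl : IsNormalFilter (l : Filter K)) (X : Set (Fin n ↪o K)) :
    X ∈ cubeFilter (Fin n) (l : Filter K) ∨ Xᶜ ∈ cubeFilter (Fin n) (l : Filter K) := by
  induction n with
  | zero =>
    rcases X.eq_empty_or_nonempty with rfl | hX
    · simp
    · have : Subsingleton (Fin 0 ↪o K) := ⟨fun _ _ => RelEmbedding.ext fun i => i.elim0⟩
      simp [hX.eq_univ]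
  | succ n ih =>
    have hsection (a : K) : tupleSection X a ∈ cubeFilter (Fin n) (l : Filter K) ∨
        tupleSection Xᶜ a ∈ cubeFilter (Fin n) (l : Filter K) :=
      (ih _).imp_right fun h => mem_of_superset h (compl_tupleSection_subset X a)
    exact (Ultrafilter.eventually_or.1 (Eventually.of_forall hsection)).imp
      hl.mem_cubeFilter_of_eventually_tupleSection hl.mem_cubeFilter_of_eventually_tupleSection

theorem IsNormalFilter.mem_or_compl_mem_cubeFilter [Finite I] {l : Ultrafilter K}
    (hl : IsNormalFilter (l : Filter K)) (X : Set (I ↪o K)) :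
    X ∈ cubeFilter I (l : Filter K) ∨ Xᶜ ∈ cubeFilter I (l : Filter K) := by
  have := Fintype.ofFinite I
  rw [← map_trans_cubeFilter (Fintype.orderIsoFinOfCardEq I rfl).symm]
  exact hl.mem_or_compl_mem_cubeFilter_fin _

end Rowbottom

section Measures

variable {C K : Type*} [LinearOrder C] [LinearOrder K] {U : Set (Set K)}

theorem isUltra_Ucn (hU : IsUltra U) (hnp : ∀ a : K, {a} ∉ U)
    (hnormal : ∀ f : K → Set K, (∀ a, f a ∈ U) → {b | ∀ a < b, b ∈ f a} ∈ U) (s : Finset C) :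
    IsUltra (Ucn U s) := by
  obtain ⟨l, rfl⟩ := hU.exists_ultrafilter
  have hl : IsNormalFilter (l : Filter K) := hnormal
  have := neBot_cubeFilter_of_finite (I := s) (hl.eventually_eventually_lt hnp)
  rw [Ucn_sets]
  exact isUltra_sets hl.mem_or_compl_mem_cubeFilter

theorem ctblComplete_Ucn (hU : IsUltra U) (hcomplete : CtblComplete U) (s : Finset C) :
    CtblComplete (Ucn U s) := by
  obtain ⟨l, rfl⟩ := hU.exists_ultrafilter
  have := ctblComplete_sets_iff.1 hcomplete
  rw [Ucn_sets, ctblComplete_sets_iff]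
  infer_instance

theorem exists_orderEmbedding_forall_subtype_trans_mem (hU : IsUltra U)
    (hcomplete : CtblComplete U) (hnp : ∀ a : K, {a} ∉ U)
    (hnormal : ∀ f : K → Set K, (∀ a, f a ∈ U) → {b | ∀ a < b, b ∈ f a} ∈ U)
    [Countable C] [WellFoundedLT C] {ι : Sort*} [Countable ι] (c : ι → Finset C)
    {X : ∀ n, Set (c n ↪o K)} (hX : ∀ n, X n ∈ Ucn U (c n)) :
    ∃ f : C ↪o K, ∀ n, (OrderEmbedding.subtype (· ∈ c n)).trans f ∈ X n := by
  obtain ⟨l, rfl⟩ := hU.exists_ultrafilter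
  have hl : IsNormalFilter (l : Filter K) := hnormal
  have := ctblComplete_sets_iff.1 hcomplete
  have := neBot_cubeFilter_of_countable (I := C) (hl.eventually_eventually_lt hnp)
  simp only [Ucn_sets] at hX
  have hrestrict (n : ι) : ∀ᶠ f in cubeFilter C (l : Filter K),
      (OrderEmbedding.subtype (· ∈ c n)).trans f ∈ X n := tendsto_trans_cubeFilter _ _ (hX n)
  exact (eventually_countable_forall.2 hrestrict).exists

theorem statement_15_general (hU : IsUltra U) (hcomplete : CtblComplete U)
    (hnp : ∀ a : K, {a} ∉ U)
    (hnormal : ∀ f : K → Set K, (∀ a, f a ∈ U) → {b | ∀ a < b, b ∈ f a} ∈ U)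
    [Countable C] [WellFoundedLT C] (cn : ℕ → Finset C) :
    (∀ n, IsUltra (Ucn U (cn n)) ∧ CtblComplete (Ucn U (cn n))) ∧
    ∀ X : ∀ n, Set (cn n ↪o K), (∀ n, X n ∈ Ucn U (cn n)) →
      ∃ f : C ↪o K, ∀ n, (OrderEmbedding.subtype (· ∈ cn n)).trans f ∈ X n :=
  ⟨fun n => ⟨isUltra_Ucn hU hnp hnormal (cn n), ctblComplete_Ucn hU hcomplete (cn n)⟩,
    fun _ => exists_orderEmbedding_forall_subtype_trans_mem hU hcomplete hnp hnormal cn⟩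

end Measures

/-!
Statement 15: Let `κ` be a measurable cardinal (represented by a well-ordered type `K`)
with a normal measure `U`, let `C` be a countable well-order covered by finite suborders
`c_n`.  Then each `U_{c_n}` is an `ω₁`-complete ultrafilter and for all `X_n ∈ U_{c_n}`
there is an order embedding `f : C ↪o K` with `f ↾ c_n ∈ X_n` for all `n`.
-/

theorem statement_15 (K : Type) [LinearOrder K] (hwoK : WellFoundedLT K)
    (hbig : Cardinal.aleph0 < Cardinal.mk K)
    (U : Set (Set K)) (hU : IsUltra U)
    (hcomplete : ∀ (I : Type) (f : I → Set K),
      Cardinal.mk I < Cardinal.mk K → (∀ i, f i ∈ U) → (⋂ i, f i) ∈ U)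
    (hnp : ∀ a : K, ({a} : Set K) ∉ U)
    (hnormal : ∀ f : K → Set K, (∀ a, f a ∈ U) → {b : K | ∀ a < b, b ∈ f a} ∈ U)
    (C : Type) [LinearOrder C] (hctble : Countable C) (hwoC : WellFoundedLT C)
    (cn : ℕ → Finset C) (hcover : ∀ x : C, ∃ n, x ∈ cn n) :
    (∀ n, IsUltra (Ucn U (cn n)) ∧ CtblComplete (Ucn U (cn n))) ∧
    ∀ X : ∀ n, Set ((↥(cn n) : Type _) ↪o K),
      (∀ n, X n ∈ Ucn U (cn n)) →
      ∃ f : C ↪o K, ∀ n,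
        ((OrderEmbedding.subtype (· ∈ cn n)).trans f) ∈ X n :=
  statement_15_general hU (fun f => hcomplete ℕ f (Cardinal.mk_nat ▸ hbig)) hnp hnormal cn

end
end
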